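/- Let p and q be integers with 4 ≤ p ≤ q and n = p + q. Every tree T ∈ 𝒯_n^{p,q} that is isomorphic to neither B_{p,q}^{0,0} nor B_{p,q}^{0,1} satisfies T ≺_s B_{p,q}^{0,1}; that is, B_{p,q}^{0,1} is the unique second last tree in the S-order among 𝒯_n^{p,q}. -/

import Mathlib

open SimpleGraph

open scoped Classical in
/-- The adjacency matrix of a simple graph, with real entries. -/
noncomputable def adjMat {V : Type*} [Fintype V] (G : SimpleGraph V) : Matrix V V ℝ :=
  Matrix.of fun a b => if G.Adj a b then 1 else 0

/-- The `k`-th spectral moment `S_k(G) = tr(A(G)^k)`. -/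
noncomputable def spectralMoment {V : Type*} [Fintype V] [DecidableEq V]
    (G : SimpleGraph V) (k : ℕ) : ℝ :=
  Matrix.trace (adjMat G ^ k)

/-- `SLt G₁ G₂` means `G₁ ≺_s G₂`: for some `k` with `1 ≤ k ≤ n - 1`,
`S_i(G₁) = S_i(G₂)` for all `i < k` and `S_k(G₁) < S_k(G₂)`. -/
def SLt {V : Type*} [Fintype V] [DecidableEq V] (G₁ G₂ : SimpleGraph V) : Prop :=
  ∃ k : ℕ, 1 ≤ k ∧ k ≤ Fintype.card V - 1 ∧
    (∀ i < k, spectralMoment G₁ i = spectralMoment G₂ i) ∧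
    spectralMoment G₁ k < spectralMoment G₂ k

/-- The tree `B_{p,q}^{k,l}` on `p + q` vertices: vertex `0 = u` is adjacent to `1 = v`
and to the `q - 1` vertices `2, …, q`; the distinguished neighbor `2` of `u` carries the
`k` pendant leaves `q+1, …, q+k`; the `l` neighbors `3, …, l+2` of `u` carry one pendant
leaf each (`q+k+j` is attached to `j+2` for `1 ≤ j ≤ l`); and `v` carries the
`p - k - l - 1` pendant leaves `q+k+l+1, …, p+q-1`. -/
def BTree (p q k l : ℕ) : SimpleGraph (Fin (p + q)) :=
  SimpleGraph.fromRel (fun a b =>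
    (a.val = 0 ∧ b.val = 1) ∨
    (a.val = 0 ∧ 2 ≤ b.val ∧ b.val ≤ q) ∨
    (a.val = 2 ∧ q + 1 ≤ b.val ∧ b.val ≤ q + k) ∨
    (q + k + 1 ≤ b.val ∧ b.val ≤ q + k + l ∧ a.val = b.val - (q + k) + 2) ∨
    (a.val = 1 ∧ q + k + l + 1 ≤ b.val))

/-- The tree `D_{p,q}^{k,l}` on `p + q` vertices: vertex `1 = v` is adjacent to `0 = u`
and to the `p - 1` vertices `2, …, p`; the distinguished neighbor `2` of `v` carries the
`k` pendant leaves `p+1, …, p+k`; the `l` neighbors `3, …, l+2` of `v` carry one pendant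
leaf each; and `u` carries the `q - k - l - 1` pendant leaves `p+k+l+1, …, p+q-1`. -/
def DTree (p q k l : ℕ) : SimpleGraph (Fin (p + q)) :=
  SimpleGraph.fromRel (fun a b =>
    (a.val = 0 ∧ b.val = 1) ∨
    (a.val = 1 ∧ 2 ≤ b.val ∧ b.val ≤ p) ∨
    (a.val = 2 ∧ p + 1 ≤ b.val ∧ b.val ≤ p + k) ∨
    (p + k + 1 ≤ b.val ∧ b.val ≤ p + k + l ∧ a.val = b.val - (p + k) + 2) ∨
    (a.val = 0 ∧ p + k + l + 1 ≤ b.val))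

/-- `T ∈ 𝒯_{p+q}^{p,q}`: `T` is a tree on `p + q` vertices with a `(p,q)`-bipartition. -/
def TreeBip (p q : ℕ) (G : SimpleGraph (Fin (p + q))) : Prop :=
  G.IsTree ∧ ∃ A : Finset (Fin (p + q)), A.card = p ∧
    ∀ ⦃x y : Fin (p + q)⦄, G.Adj x y → (x ∈ A ↔ y ∉ A)


/-!
All trees of order `n` have the same moments `S_0, …, S_3`, and `S_4` of a tree is
`2 ∑ d(x)² - ∑ d(x)`, so at that point the S-order compares `∑ (d(x) - 1)²`. For a tree with a
`(p, q)`-bipartition the excesses `d(x) - 1` over the class of size `p` sum to `q - 1`, and those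
over the class of size `q` sum to `p - 1`. The value on `B_{p,q}^{0,1}` is
`(q - 1)² + (p - 2)² + 1`, and by convexity a tree reaches it only if some `u` is adjacent to the
whole class of size `q` and some vertex `v` of that class misses at most one vertex of the other
class. Such a tree is determined by whether `v` misses a vertex: it is `B_{p,q}^{0,1}` if it does
and `B_{p,q}^{0,0}` if not.
-/

section SpectralMoments

variable {V : Type*} [Fintype V]

lemma adjMat_eq_adjMatrix (G : SimpleGraph V) [DecidableRel G.Adj] :
    adjMat G = G.adjMatrix ℝ := by
  ext a b
  simp [adjMat, adjMatrix_apply]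

lemma sum_card_commonNeighbors (G : SimpleGraph V) [DecidableRel G.Adj] :
    ∑ x, ∑ y, Fintype.card (G.commonNeighbors x y) = ∑ z, G.degree z ^ 2 := by
  have hcard (x y : V) : Fintype.card (G.commonNeighbors x y) =
      ∑ z, (if G.Adj z x then 1 else 0) * (if G.Adj z y then 1 else 0) := by
    simp [Fintype.card_subtype, mem_commonNeighbors, ← ite_and, G.adj_comm x, G.adj_comm y,
      and_comm]
  have hdegree (z : V) : G.degree z = ∑ x, if G.Adj z x then 1 else 0 := by
    simp [← card_neighborFinset_eq_degree, neighborFinset_eq_filter]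
  simp only [hcard, hdegree, sq, Finset.sum_mul_sum]
  rw [Finset.sum_comm_cycle]

variable [DecidableEq V] {G : SimpleGraph V}

lemma spectralMoment_zero : spectralMoment G 0 = Fintype.card V := by
  simp [spectralMoment]

lemma spectralMoment_eq_zero_of_odd (hG : G.IsBipartite) {k : ℕ} (hk : Odd k) :
    spectralMoment G k = 0 := by
  classical
  rw [spectralMoment, adjMat_eq_adjMatrix]
  refine Finset.sum_eq_zero fun x _ => ?_
  have : IsEmpty {c : G.Walk x x | c.length = k} :=
    ⟨fun ⟨c, hc⟩ => Nat.not_even_iff_odd.mpr hk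
      (hc ▸ two_colorable_iff_forall_loop_even.mp hG x c)⟩
  rw [Matrix.diag_apply, adjMatrix_pow_apply_eq_card_walk, Fintype.card_eq_zero, Nat.cast_zero]

variable [DecidableRel G.Adj]

lemma spectralMoment_two : spectralMoment G 2 = ∑ x, (G.degree x : ℝ) := by
  simp only [spectralMoment, adjMat_eq_adjMatrix, pow_two, Matrix.trace, Matrix.diag_apply,
    adjMatrix_mul_self_apply_self]

lemma adjMatrix_sq_apply (x y : V) :
    (G.adjMatrix ℝ ^ 2) x y = Fintype.card (G.commonNeighbors x y) := by
  rw [adjMatrix_pow_apply_eq_card_walk]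
  exact congrArg _ (Fintype.card_congr (walkLengthTwoEquivCommonNeighbors G x y))

lemma spectralMoment_four_eq_sum_card_commonNeighbors_sq :
    spectralMoment G 4 = ∑ x, ∑ y, (Fintype.card (G.commonNeighbors x y) : ℝ) ^ 2 := by
  have hsq : adjMat G ^ 4 = G.adjMatrix ℝ ^ 2 * G.adjMatrix ℝ ^ 2 := by
    rw [adjMat_eq_adjMatrix, ← pow_add]
  have hsymm (x y : V) : (G.adjMatrix ℝ ^ 2) y x = (G.adjMatrix ℝ ^ 2) x y :=
    G.isSymm_adjMatrix.pow 2 |>.apply x y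
  rw [spectralMoment, hsq]
  refine Finset.sum_congr rfl fun x _ => Finset.sum_congr rfl fun y _ => ?_
  dsimp only
  rw [hsymm x y, adjMatrix_sq_apply, sq]

/-- The diagonal of `A(G) ^ 2` holds the degrees; without 4-cycles its other entries are `0` or
`1`, so squaring an entry changes it only on the diagonal. -/
lemma spectralMoment_four
    (hG : Pairwise fun x y => (G.commonNeighbors x y).Subsingleton) :
    spectralMoment G 4 = 2 * ∑ x, (G.degree x : ℝ) ^ 2 - ∑ x, (G.degree x : ℝ) := by
  have hsq (x y : V) : (Fintype.card (G.commonNeighbors x y) : ℝ) ^ 2 =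
      Fintype.card (G.commonNeighbors x y) +
        if x = y then (G.degree x : ℝ) ^ 2 - G.degree x else 0 := by
    split_ifs with hxy
    · subst hxy
      have hdegree : Fintype.card (G.commonNeighbors x x) = G.degree x := by
        simp [Fintype.card_subtype, mem_commonNeighbors, ← card_neighborFinset_eq_degree,
          neighborFinset_eq_filter]
      rw [hdegree]
      ring
    · have hle : Fintype.card (G.commonNeighbors x y) ≤ 1 :=
        Fintype.card_le_one_iff_subsingleton.mpr (hG hxy).coe_sort
      interval_cases Fintype.card (G.commonNeighbors x y) <;> norm_num
  have htotal : ∑ x, ∑ y, (Fintype.card (G.commonNeighbors x y) : ℝ) =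
      ∑ z, (G.degree z : ℝ) ^ 2 := by
    exact_mod_cast sum_card_commonNeighbors G
  simp only [spectralMoment_four_eq_sum_card_commonNeighbors_sq, hsq, Finset.sum_add_distrib,
    htotal, Finset.sum_ite_eq, Finset.mem_univ, if_true, Finset.sum_sub_distrib]
  ring

end SpectralMoments

section Trees

variable {V : Type*} {G H : SimpleGraph V}

lemma commonNeighbors_subsingleton_of_isAcyclic (hG : G.IsAcyclic) {x y : V} (hxy : x ≠ y) :
    (G.commonNeighbors x y).Subsingleton := by
  intro a ha b hb
  rw [mem_commonNeighbors] at ha hb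
  let path (c : V) (hc : G.Adj x c ∧ G.Adj y c) : G.Path x y :=
    ⟨.cons hc.1 (.cons hc.2.symm .nil), by
      simp [Walk.cons_isPath_iff, hc.1.ne, hc.2.ne', hxy]⟩
  simpa [path] using congrArg (fun c : G.Path x y => c.1.support)
    ((hG.subsingleton_path x y).elim (path a ha) (path b hb))

variable [Fintype V] [DecidableRel G.Adj]

lemma one_le_degree_of_isTree [Nontrivial V] (hG : G.IsTree) (x : V) : 1 ≤ G.degree x :=
  hG.connected.preconnected.degree_pos_of_nontrivial x

lemma sum_degree_add_two_of_isTree (hG : G.IsTree) :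
    ∑ x, G.degree x + 2 = 2 * Fintype.card V := by
  classical
  rw [sum_degrees_eq_twice_card_edges, ← hG.card_edgeFinset]
  ring

/-- The squared excesses `(deg x - 1) ^ 2` and the squared degrees are in the same order on trees,
since the degree sum of a tree is determined by its order. -/
lemma sum_degree_sq_of_isTree [Nontrivial V] (hG : G.IsTree) :
    ∑ x, G.degree x ^ 2 + 4 = ∑ x, (G.degree x - 1) ^ 2 + 3 * Fintype.card V := by
  have hsq : ∀ x, G.degree x ^ 2 + 1 = (G.degree x - 1) ^ 2 + 2 * G.degree x := fun x => by
    obtain ⟨d, hd⟩ := Nat.exists_eq_add_of_le (one_le_degree_of_isTree hG x)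
    rw [hd, Nat.add_sub_cancel_left]
    ring
  have hsum := Finset.sum_congr rfl fun x (_ : x ∈ Finset.univ) => hsq x
  simp only [Finset.sum_add_distrib, ← Finset.mul_sum, Finset.sum_const, Finset.card_univ,
    smul_eq_mul, mul_one] at hsum
  have := sum_degree_add_two_of_isTree hG
  omega

lemma sLt_of_isTree [DecidableEq V] [DecidableRel H.Adj] (hG : G.IsTree) (hH : H.IsTree)
    (hV : 5 ≤ Fintype.card V)
    (hlt : ∑ x, (G.degree x - 1) ^ 2 < ∑ x, (H.degree x - 1) ^ 2) : SLt G H := by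
  have : Nontrivial V := Fintype.one_lt_card_iff_nontrivial.mp (by omega)
  have hsum : ∑ x, (G.degree x : ℝ) = ∑ x, (H.degree x : ℝ) := by
    exact_mod_cast (Nat.add_right_cancel
      ((sum_degree_add_two_of_isTree hG).trans (sum_degree_add_two_of_isTree hH).symm))
  refine ⟨4, by norm_num, by omega, fun i hi => ?_, ?_⟩
  · interval_cases i
    · rw [spectralMoment_zero, spectralMoment_zero]
    · rw [spectralMoment_eq_zero_of_odd hG.isBipartite odd_one,
        spectralMoment_eq_zero_of_odd hH.isBipartite odd_one]
    · rw [spectralMoment_two, spectralMoment_two, hsum]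
    · rw [spectralMoment_eq_zero_of_odd hG.isBipartite (by decide),
        spectralMoment_eq_zero_of_odd hH.isBipartite (by decide)]
  · have hsq : ∑ x, (G.degree x : ℝ) ^ 2 < ∑ x, (H.degree x : ℝ) ^ 2 := by
      have hG' := sum_degree_sq_of_isTree hG
      have hH' := sum_degree_sq_of_isTree hH
      exact_mod_cast (by omega : ∑ x, G.degree x ^ 2 < ∑ x, H.degree x ^ 2)
    rw [spectralMoment_four fun _ _ => commonNeighbors_subsingleton_of_isAcyclic hG.isAcyclic,
      spectralMoment_four fun _ _ => commonNeighbors_subsingleton_of_isAcyclic hH.isAcyclic, hsum]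
    linarith

lemma sum_degree_sub_one_of_isBipartiteWith [DecidableEq V] [Nontrivial V] (hG : G.IsTree)
    {A : Finset V} (hA : G.IsBipartiteWith A (Aᶜ : Finset V)) :
    ∑ x ∈ A, (G.degree x - 1) + 1 = Aᶜ.card := by
  have hdeg : ∑ x ∈ A, (G.degree x - 1) + A.card = ∑ x ∈ A, G.degree x := by
    rw [Finset.card_eq_sum_ones, ← Finset.sum_add_distrib]
    exact Finset.sum_congr rfl fun x _ => Nat.sub_add_cancel (one_le_degree_of_isTree hG x)
  have hedges := isBipartiteWith_sum_degrees_eq_card_edges hA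
  have hcard := hG.card_edgeFinset
  have := A.card_add_card_compl
  omega

end Trees

section Comap

variable {V W ι : Type*} [Fintype V] [Fintype W] [DecidableEq ι] (R : SimpleGraph ι)

lemma nonempty_iso_comap_of_card_fiber_eq {c : V → ι} {d : W → ι}
    (h : ∀ i, Fintype.card {a // c a = i} = Fintype.card {b // d b = i}) :
    Nonempty (R.comap c ≃g R.comap d) :=
  ⟨⟨Equiv.ofFiberEquiv fun i => Fintype.equivOfCardEq (h i), by
    simp only [comap_adj, Equiv.ofFiberEquiv_map, implies_true]⟩⟩

variable [Fintype ι] [DecidableRel R.Adj] (c : V → ι)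

lemma degree_comap [DecidableRel (R.comap c).Adj] (a : V) :
    (R.comap c).degree a =
      ∑ j ∈ R.neighborFinset (c a), Fintype.card {b // c b = j} := by
  classical
  have hmaps : ∀ b ∈ (R.comap c).neighborFinset a, c b ∈ R.neighborFinset (c a) := by
    simp
  rw [← card_neighborFinset_eq_degree, Finset.card_eq_sum_card_fiberwise hmaps]
  refine Finset.sum_congr rfl fun j hj => ?_
  rw [Fintype.card_subtype]
  congr 1
  ext b
  simp only [mem_neighborFinset, comap_adj, Finset.mem_filter, Finset.mem_univ, true_and,
    and_iff_right_iff_imp] at hj ⊢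
  rintro rfl
  exact hj

lemma sum_comp_degree_comap {M : Type*} [AddCommMonoid M]
    [DecidableRel (R.comap c).Adj] (f : ℕ → M) :
    ∑ a, f ((R.comap c).degree a) =
      ∑ i, Fintype.card {a // c a = i} •
        f (∑ j ∈ R.neighborFinset i, Fintype.card {b // c b = j}) := by
  simp only [degree_comap]
  rw [← Finset.sum_fiberwise' Finset.univ c fun i =>
    f (∑ j ∈ R.neighborFinset i, Fintype.card {b // c b = j})]
  simp only [Finset.sum_const, Fintype.card_subtype]

end Comap

/-- The parts played by the vertices of `B_{p,q}^{0,0}` and `B_{p,q}^{0,1}`: the two centers, the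
leaf `w` in the class of `u` by which the two trees differ, the neighbor `x` of `u` that carries `w`
in `B_{p,q}^{0,1}`, and the remaining leaves at either center. -/
inductive Role
  | u | v | w | x | leafU | leafV
  deriving DecidableEq

namespace Role

instance : Fintype Role := ⟨{u, v, w, x, leafU, leafV}, by rintro ⟨⟩ <;> decide⟩

/-- The tree on the six roles in which `w` hangs from `y`; blowing up the leaf roles turns it into
`B_{p,q}^{0,0}` for `y = v` and into `B_{p,q}^{0,1}` for `y = x`. -/
def pattern (y : Role) : SimpleGraph Role :=
  fromEdgeSet {s(u, v), s(u, x), s(u, leafU), s(v, leafV), s(y, w)}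

instance (y : Role) : DecidableRel (pattern y).Adj := fun a b =>
  decidable_of_iff
    (s(a, b) ∈ ({s(u, v), s(u, x), s(u, leafU), s(v, leafV), s(y, w)} : Finset _) ∧ a ≠ b)
    (by simp [pattern])

/-- The number of vertices with a given role. -/
def count (p q : ℕ) : Role → ℕ
  | leafU => q - 2
  | leafV => p - 2
  | _ => 1

end Role

/-- A bipartition of `V` into classes `left` and `leftᶜ` of sizes `p` and `q` with two vertices
marked in each: the choices needed to place `B_{p,q}^{0,0}` and `B_{p,q}^{0,1}` on `V`, with `u`,
`v`, `w` and `x` in the roles of the same name. -/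
structure MarkedBipartition (V : Type*) [Fintype V] [DecidableEq V] (p q : ℕ) where
  left : Finset V
  card_left : left.card = p
  card_right : leftᶜ.card = q
  u : V
  w : V
  v : V
  x : V
  u_mem : u ∈ left
  w_mem : w ∈ left
  v_notMem : v ∉ left
  x_notMem : x ∉ left
  w_ne_u : w ≠ u
  x_ne_v : x ≠ v

namespace MarkedBipartition

variable {V W : Type*} [Fintype V] [DecidableEq V] [Fintype W] [DecidableEq W] {p q : ℕ}
  (F : MarkedBipartition V p q)

/-- The role that a marked bipartition gives to a vertex. Unmarked vertices of `leftᶜ` are leaves at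
`u`, those of `left` are leaves at `v`. -/
def role (a : V) : Role :=
  if a ∈ F.left then if a = F.u then .u else if a = F.w then .w else .leafV
  else if a = F.v then .v else if a = F.x then .x else .leafU

/-- The double star with centers `u`, `v` on a marked bipartition, with the leaf `w` moved to the
vertices of role `y`: a copy of `B_{p,q}^{0,0}` for `y = v` and of `B_{p,q}^{0,1}` for `y = x`. -/
abbrev graph (y : Role) : SimpleGraph V := (Role.pattern y).comap F.role

lemma card_role_eq (i : Role) : Fintype.card {a // F.role a = i} = i.count p q := by
  have hu := F.u_mem
  have hw := F.w_mem
  have hv := F.v_notMem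
  have hx := F.x_notMem
  have hwu := F.w_ne_u
  have hxv := F.x_ne_v
  suffices ∃ s : Finset V, (∀ a, a ∈ s ↔ F.role a = i) ∧ s.card = i.count p q by
    obtain ⟨s, hs, hcard⟩ := this
    rw [Fintype.card_of_subtype s hs, hcard]
  cases i with
  | u => exact ⟨{F.u}, by grind [role], rfl⟩
  | v => exact ⟨{F.v}, by grind [role], rfl⟩
  | w => exact ⟨{F.w}, by grind [role], rfl⟩
  | x => exact ⟨{F.x}, by grind [role], rfl⟩
  | leafU =>
    refine ⟨F.leftᶜ \ {F.v, F.x}, by grind [role, Finset.mem_compl], ?_⟩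
    rw [Finset.card_sdiff_of_subset (by grind [Finset.mem_compl]), F.card_right,
      Finset.card_pair hxv.symm]
    rfl
  | leafV =>
    refine ⟨F.left \ {F.u, F.w}, by grind [role], ?_⟩
    rw [Finset.card_sdiff_of_subset (by grind), F.card_left, Finset.card_pair hwu.symm]
    rfl

lemma nonempty_iso_graph (F' : MarkedBipartition W p q) (y : Role) :
    Nonempty (F.graph y ≃g F'.graph y) :=
  nonempty_iso_comap_of_card_fiber_eq _ fun i => by rw [card_role_eq, card_role_eq]

lemma two_le_card_left (F : MarkedBipartition V p q) : 2 ≤ p := by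
  rw [← F.card_left, ← Finset.card_pair F.w_ne_u]
  exact Finset.card_le_card (Finset.insert_subset F.w_mem (by simpa using F.u_mem))

lemma two_le_card_right (F : MarkedBipartition V p q) : 2 ≤ q := by
  rw [← F.card_right, ← Finset.card_pair F.x_ne_v]
  exact Finset.card_le_card (Finset.insert_subset (by simpa using F.x_notMem)
    (by simpa using F.v_notMem))

lemma sum_comp_degree_graph_x [DecidableRel (F.graph .x).Adj] (f : ℕ → ℕ) :
    ∑ a, f ((F.graph .x).degree a) = f q + f (p - 1) + f 2 + (p + q - 3) * f 1 := by
  have hp := F.two_le_card_left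
  have hq := F.two_le_card_right
  have huniv : (Finset.univ : Finset Role) = {.u, .v, .w, .x, .leafU, .leafV} := by decide
  have hu : (Role.pattern .x).neighborFinset .u = {.v, .x, .leafU} := by decide
  have hv : (Role.pattern .x).neighborFinset .v = {.u, .leafV} := by decide
  have hw : (Role.pattern .x).neighborFinset .w = {.x} := by decide
  have hx : (Role.pattern .x).neighborFinset .x = {.u, .w} := by decide
  have hleafU : (Role.pattern .x).neighborFinset .leafU = {.u} := by decide
  have hleafV : (Role.pattern .x).neighborFinset .leafV = {.v} := by decide
  rw [sum_comp_degree_comap]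
  simp only [card_role_eq, huniv, smul_eq_mul, Role.count, Finset.mem_insert, reduceCtorEq,
    Finset.mem_singleton, or_self, not_false_eq_true, Finset.sum_insert, hu, Finset.sum_singleton,
    one_mul, hv, hw, hx, Nat.reduceAdd, hleafU, hleafV]
  rw [show 1 + (1 + (q - 2)) = q by omega, show 1 + (p - 2) = p - 1 by omega,
    show p + q - 3 = 1 + (q - 2) + (p - 2) by omega]
  ring

lemma role_u : F.role F.u = .u := by simp [role, F.u_mem]

lemma role_v : F.role F.v = .v := by simp [role, F.v_notMem]

lemma role_x : F.role F.x = .x := by simp [role, F.x_notMem, F.x_ne_v]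

variable {F} in
lemma eq_v_of_role_eq {a : V} (ha : F.role a = .v) : a = F.v := by grind [role]

variable {F} in
lemma eq_x_of_role_eq {a : V} (ha : F.role a = .x) : a = F.x := by grind [role]

lemma connected_graph {y : Role} (hy : y = .v ∨ y = .x) : (F.graph y).Connected := by
  have adj {a b : V} (h : (Role.pattern y).Adj (F.role a) (F.role b)) :
      (F.graph y).Reachable a b := Adj.reachable h
  obtain ⟨b, hb⟩ : ∃ b, F.role b = y := by
    rcases hy with rfl | rfl
    exacts [⟨F.v, F.role_v⟩, ⟨F.x, F.role_x⟩]
  have hub : (F.graph y).Reachable F.u b := adj <| by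
    rw [F.role_u, hb]
    rcases hy with rfl | rfl <;> decide
  refine (connected_iff_exists_forall_reachable _).mpr ⟨F.u, fun a => ?_⟩
  cases ha : F.role a with
  | u =>
    obtain rfl : a = F.u := by grind [role]
    rfl
  | w => exact hub.trans (adj (by rw [ha, hb]; rcases hy with rfl | rfl <;> decide))
  | leafV =>
    exact (adj (b := F.v) (by simp [role_u, role_v, Role.pattern])).trans
      (adj (by simp [ha, role_v, Role.pattern]))
  | v | x | leafU => exact adj (by simp [ha, role_u, Role.pattern])

lemma isTree_graph_x : (F.graph .x).IsTree := by
  classical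
  have hp := F.two_le_card_left
  have hq := F.two_le_card_right
  have hV : Fintype.card V = p + q := by
    rw [← F.left.card_add_card_compl, F.card_left, F.card_right]
  have hdegree := F.sum_comp_degree_graph_x id
  rw [isTree_iff_connected_and_card]
  refine ⟨F.connected_graph (.inr rfl), ?_⟩
  rw [Nat.card_eq_fintype_card, ← edgeFinset_card, Nat.card_eq_fintype_card, hV]
  simp only [id, sum_degrees_eq_twice_card_edges] at hdegree
  omega

lemma eq_graph_of_adj {T : SimpleGraph V} (hT : T.IsTree) {y : Role} (hy : y = .v ∨ y = .x)
    (hu : ∀ b ∉ F.left, T.Adj F.u b) (hv : ∀ a ∈ F.left, a ≠ F.w → T.Adj F.v a)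
    (hw : ∀ b, F.role b = y → T.Adj b F.w) : T = F.graph y := by
  refine ((isTree_iff_minimal_connected.mp hT).eq_of_le (F.connected_graph hy) ?_).symm
  intro a b hab
  have hrole : s(F.role a, F.role b) ∈
      ({s(.u, .v), s(.u, .x), s(.u, .leafU), s(.v, .leafV), s(y, .w)} : Set (Sym2 Role)) := hab.1
  simp only [Set.mem_insert_iff, Set.mem_singleton_iff, Sym2.eq_iff] at hrole
  rcases hrole with h | h | h | h | h <;> rcases h with ⟨ha, hb⟩ | ⟨ha, hb⟩ <;>
    grind [role, SimpleGraph.adj_comm]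

end MarkedBipartition

section Bipartition

variable {V : Type*} [Fintype V] [DecidableEq V] {G : SimpleGraph V} {A : Finset V}

lemma isBipartiteWith_of_forall_adj (hA : ∀ ⦃x y : V⦄, G.Adj x y → (x ∈ A ↔ y ∉ A)) :
    G.IsBipartiteWith A (Aᶜ : Finset V) where
  disjoint := by simpa using disjoint_compl_right
  mem_of_adj x y hxy := by
    have := hA hxy
    simp only [Finset.mem_coe, Finset.mem_compl]
    tauto

lemma isBipartiteWith_compl (hA : G.IsBipartiteWith A (Aᶜ : Finset V)) :
    G.IsBipartiteWith (Aᶜ : Finset V) (Aᶜᶜ : Finset V) := by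
  rw [compl_compl]
  exact hA.symm

end Bipartition

section Recognition

variable {V : Type*} [Fintype V] [DecidableEq V] {T : SimpleGraph V} [DecidableRel T.Adj]
  {A : Finset V} {u v : V}

lemma adj_of_isBipartiteWith_of_card_le_degree (hA : T.IsBipartiteWith A (Aᶜ : Finset V))
    (hu : u ∈ A) (hdeg : Aᶜ.card ≤ T.degree u) {b : V} (hb : b ∉ A) : T.Adj u b := by
  rw [← card_neighborFinset_eq_degree] at hdeg
  have := Finset.eq_of_subset_of_card_le
    (isBipartiteWith_neighborFinset_subset hA hu) hdeg
  rw [← mem_neighborFinset, this]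
  exact Finset.mem_compl.mpr hb

lemma exists_ne_forall_adj_of_isBipartiteWith (hA : T.IsBipartiteWith A (Aᶜ : Finset V))
    (hcard : 2 ≤ A.card) (hu : u ∈ A) (hv : v ∉ A) (hvu : T.Adj v u)
    (hdeg : A.card ≤ T.degree v + 1) :
    ∃ w ∈ A, w ≠ u ∧ ∀ a ∈ A, a ≠ w → T.Adj v a := by
  by_cases hall : ∀ a ∈ A, T.Adj v a
  · obtain ⟨w, hw, hwu⟩ := Finset.exists_mem_ne hcard u
    exact ⟨w, hw, hwu, fun a ha _ => hall a ha⟩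
  · push Not at hall
    obtain ⟨w, hw, hvw⟩ := hall
    have hsub : T.neighborFinset v ⊆ A.erase w := fun a ha => by
      have haA := isBipartiteWith_neighborFinset_subset' hA (Finset.mem_compl.mpr hv) ha
      exact Finset.mem_erase.mpr ⟨by rintro rfl; exact hvw (by simpa using ha), haA⟩
    have heq := Finset.eq_of_subset_of_card_le hsub (by
      rw [card_neighborFinset_eq_degree, Finset.card_erase_of_mem hw]
      omega)
    refine ⟨w, hw, by rintro rfl; exact hvw hvu, fun a ha haw => ?_⟩
    rw [← mem_neighborFinset, heq]
    exact Finset.mem_erase.mpr ⟨haw, ha⟩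

lemma exists_eq_graph_of_card_le_degree (hT : T.IsTree)
    (hA : T.IsBipartiteWith A (Aᶜ : Finset V)) {p q : ℕ} (hp : A.card = p) (hq : Aᶜ.card = q)
    (hp2 : 2 ≤ p) (hq2 : 2 ≤ q) (hu : u ∈ A) (hv : v ∉ A)
    (hdegu : q ≤ T.degree u) (hdegv : p ≤ T.degree v + 1) :
    ∃ F : MarkedBipartition V p q, T = F.graph .v ∨ T = F.graph .x := by
  have hcenter : ∀ b ∉ A, T.Adj u b := fun b hb =>
    adj_of_isBipartiteWith_of_card_le_degree hA hu (hq.trans_le hdegu) hb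
  obtain ⟨w, hw, hwu, hvadj⟩ := exists_ne_forall_adj_of_isBipartiteWith hA (hp2.trans_eq hp.symm)
    hu hv (hcenter v hv).symm (hp.trans_le hdegv)
  let mark (x : V) (hx : x ∉ A) (hxv : x ≠ v) : MarkedBipartition V p q :=
    { left := A, card_left := hp, card_right := hq, u, w, v, x, u_mem := hu, w_mem := hw
      v_notMem := hv, x_notMem := hx, w_ne_u := hwu, x_ne_v := hxv }
  by_cases hvw : T.Adj v w
  · obtain ⟨x, hx, hxv⟩ := Finset.exists_mem_ne (hq2.trans_eq hq.symm) v
    let F := mark x (Finset.mem_compl.mp hx) hxv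
    exact ⟨F, .inl (F.eq_graph_of_adj hT (.inl rfl) hcenter hvadj
      fun b hb => by rwa [F.eq_v_of_role_eq hb])⟩
  · have : Nontrivial V := ⟨u, v, by rintro rfl; exact hv hu⟩
    obtain ⟨x, hwx⟩ := hT.connected.preconnected.exists_adj_of_nontrivial w
    have hxA : x ∉ A := by simpa using hA.mem_of_mem_adj hw hwx
    let F := mark x hxA (by rintro rfl; exact hvw hwx.symm)
    exact ⟨F, .inr (F.eq_graph_of_adj hT (.inr rfl) hcenter hvadj
      fun b hb => by rw [F.eq_x_of_role_eq hb]; exact hwx.symm)⟩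

end Recognition

section SumSquares

variable {ι : Type*} {s : Finset ι} {f : ι → ℕ} {N : ℕ}

lemma sum_sq_lt_of_sum_eq_add_one (hf : ∀ i ∈ s, f i < N) (hsum : ∑ i ∈ s, f i = N + 1) :
    ∑ i ∈ s, f i ^ 2 < N ^ 2 + 1 := by
  obtain ⟨i, hi⟩ : s.Nonempty :=
    Finset.nonempty_of_sum_ne_zero (by rw [hsum]; exact N.succ_ne_zero)
  obtain ⟨M, rfl⟩ := Nat.exists_eq_add_of_lt (Nat.zero_lt_of_lt (hf i hi))
  calc
    ∑ i ∈ s, f i ^ 2 ≤ ∑ i ∈ s, M * f i := by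
      refine Finset.sum_le_sum fun i hi => ?_
      rw [sq]
      have := hf i hi
      exact Nat.mul_le_mul_right _ (by omega)
    _ = M * (M + 2) := by rw [← Finset.mul_sum, hsum]; ring
    _ < (0 + M + 1) ^ 2 + 1 := by nlinarith

lemma sum_sq_le_of_sum_eq_add_one (hf : ∀ i ∈ s, f i ≤ N) (hsum : ∑ i ∈ s, f i = N + 1) :
    ∑ i ∈ s, f i ^ 2 ≤ N ^ 2 + 1 := by
  classical
  by_cases hlt : ∀ i ∈ s, f i < N
  · exact (sum_sq_lt_of_sum_eq_add_one hlt hsum).le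
  push Not at hlt
  obtain ⟨i, hi, hNi⟩ := hlt
  obtain rfl := (hf i hi).antisymm hNi
  rw [← Finset.add_sum_erase s _ hi, Nat.add_left_cancel_iff] at hsum
  have hrest := Finset.sum_sq_le_sq_sum_of_nonneg (s := s.erase i) (f := f) (by simp)
  rw [hsum, one_pow] at hrest
  rw [← Finset.add_sum_erase s _ hi]
  omega

end SumSquares

section Extremal

variable {V : Type*} [Fintype V] [DecidableEq V] [Nontrivial V] {T : SimpleGraph V}
  [DecidableRel T.Adj] {A : Finset V}

lemma sum_degree_sub_one_sq_le_of_isBipartiteWith (hT : T.IsTree)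
    (hA : T.IsBipartiteWith A (Aᶜ : Finset V)) :
    ∑ x ∈ A, (T.degree x - 1) ^ 2 ≤ (Aᶜ.card - 1) ^ 2 := by
  have hsum := sum_degree_sub_one_of_isBipartiteWith hT hA
  rw [← hsum, Nat.add_sub_cancel]
  exact Finset.sum_sq_le_sq_sum_of_nonneg (by simp)

lemma sum_degree_sub_one_sq_le_of_degree_lt (hT : T.IsTree)
    (hA : T.IsBipartiteWith A (Aᶜ : Finset V))
    (hcard : 2 ≤ Aᶜ.card) (hdeg : ∀ x ∈ A, T.degree x < Aᶜ.card) :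
    ∑ x ∈ A, (T.degree x - 1) ^ 2 ≤ (Aᶜ.card - 2) ^ 2 + 1 := by
  have hsum := sum_degree_sub_one_of_isBipartiteWith hT hA
  refine sum_sq_le_of_sum_eq_add_one (fun x hx => ?_) (by omega)
  have := hdeg x hx
  omega

lemma sum_degree_sub_one_sq_lt_of_degree_add_one_lt (hT : T.IsTree)
    (hA : T.IsBipartiteWith A (Aᶜ : Finset V))
    (hcard : 2 ≤ Aᶜ.card) (hdeg : ∀ x ∈ A, T.degree x + 1 < Aᶜ.card) :
    ∑ x ∈ A, (T.degree x - 1) ^ 2 < (Aᶜ.card - 2) ^ 2 + 1 := by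
  have hsum := sum_degree_sub_one_of_isBipartiteWith hT hA
  refine sum_sq_lt_of_sum_eq_add_one (fun x hx => ?_) (by omega)
  have := hdeg x hx
  have := one_le_degree_of_isTree hT x
  omega

lemma exists_card_le_degree_add_one (hT : T.IsTree) (hA : T.IsBipartiteWith A (Aᶜ : Finset V))
    (hcard : 2 ≤ A.card)
    (hsum : (Aᶜ.card - 1) ^ 2 + (A.card - 2) ^ 2 + 1 ≤ ∑ x, (T.degree x - 1) ^ 2) :
    ∃ v ∉ A, A.card ≤ T.degree v + 1 := by
  by_contra! hdeg
  have hleft := sum_degree_sub_one_sq_le_of_isBipartiteWith hT hA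
  have hright := sum_degree_sub_one_sq_lt_of_degree_add_one_lt hT (isBipartiteWith_compl hA)
    (by rwa [compl_compl]) (by simpa using hdeg)
  rw [compl_compl] at hright
  rw [← Finset.sum_add_sum_compl A] at hsum
  omega

/-- The left side of `hsum` is the value of its right side on `B_{p,q}^{0,1}`. If no vertex of `A`
is adjacent to the whole other class, then convexity forces `p = q` and `B` is `Aᶜ`. -/
lemma exists_bipartition_card_le_degree (hT : T.IsTree)
    (hA : T.IsBipartiteWith A (Aᶜ : Finset V)) {p q : ℕ} (hp : A.card = p) (hq : Aᶜ.card = q)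
    (hp2 : 2 ≤ p) (hq3 : 3 ≤ q) (hpq : p ≤ q)
    (hsum : (q - 1) ^ 2 + (p - 2) ^ 2 + 1 ≤ ∑ x, (T.degree x - 1) ^ 2) :
    ∃ B : Finset V, T.IsBipartiteWith B (Bᶜ : Finset V) ∧ B.card = p ∧ Bᶜ.card = q ∧
      ∃ u ∈ B, q ≤ T.degree u := by
  by_cases hfull : ∃ u ∈ A, q ≤ T.degree u
  · exact ⟨A, hA, hp, hq, hfull⟩
  push Not at hfull
  have hleft := sum_degree_sub_one_sq_le_of_degree_lt hT hA (by omega)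
    (by simpa only [hq] using hfull)
  rw [← Finset.sum_add_sum_compl A] at hsum
  have hA' := isBipartiteWith_compl hA
  obtain hlt | rfl := hpq.lt_or_eq
  · have hright := sum_degree_sub_one_sq_le_of_isBipartiteWith hT hA'
    rw [compl_compl, hp] at hright
    rw [hq] at hleft
    have hconvex : (q - 2) ^ 2 + (p - 1) ^ 2 < (q - 1) ^ 2 + (p - 2) ^ 2 := by
      obtain ⟨a, rfl⟩ := Nat.exists_eq_add_of_le' hp2
      obtain ⟨b, rfl⟩ := Nat.exists_eq_add_of_lt hlt
      rw [show a + 2 + b + 1 - 2 = a + b + 1 by omega, show a + 2 + b + 1 - 1 = a + b + 2 by omega]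
      simp only [Nat.add_sub_cancel, Nat.reduceSubDiff]
      nlinarith
    omega
  · refine ⟨Aᶜ, hA', hq, by rwa [compl_compl], ?_⟩
    by_contra! hfull'
    have hright := sum_degree_sub_one_sq_le_of_degree_lt hT hA' (by rw [compl_compl]; omega)
      (by rwa [compl_compl, hp])
    rw [compl_compl, hp] at hright
    rw [hq] at hleft
    have hlt : (p - 2) ^ 2 + 1 < (p - 1) ^ 2 := by
      obtain ⟨a, rfl⟩ := Nat.exists_eq_add_of_le' hq3
      simp only [Nat.reduceSubDiff]
      nlinarith
    omega

end Extremal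

lemma nonempty_iso_or_sLt_graph_x {V : Type*} [Fintype V] [DecidableEq V] {T : SimpleGraph V}
    {p q : ℕ} (F : MarkedBipartition V p q) (hT : T.IsTree) {A : Finset V}
    (hA : T.IsBipartiteWith A (Aᶜ : Finset V)) (hp : A.card = p) (hq : Aᶜ.card = q)
    (hq3 : 3 ≤ q) (hpq : p ≤ q) :
    Nonempty (T ≃g F.graph .v) ∨ Nonempty (T ≃g F.graph .x) ∨ SLt T (F.graph .x) := by
  classical
  have hp2 := F.two_le_card_left
  have hV : Fintype.card V = p + q := by rw [← A.card_add_card_compl, hp, hq]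
  have : Nontrivial V := Fintype.one_lt_card_iff_nontrivial.mp (by omega)
  have hF : ∑ a, ((F.graph .x).degree a - 1) ^ 2 = (q - 1) ^ 2 + (p - 2) ^ 2 + 1 :=
    (F.sum_comp_degree_graph_x fun d => (d - 1) ^ 2).trans (by simp [Nat.sub_sub])
  by_cases hlt : ∑ a, (T.degree a - 1) ^ 2 < ∑ a, ((F.graph .x).degree a - 1) ^ 2
  · exact .inr (.inr (sLt_of_isTree hT F.isTree_graph_x (by omega) hlt))
  rw [hF, not_lt] at hlt
  obtain ⟨B, hB, hBp, hBq, u, hu, hdegu⟩ :=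
    exists_bipartition_card_le_degree hT hA hp hq hp2 hq3 hpq hlt
  obtain ⟨v, hv, hdegv⟩ := exists_card_le_degree_add_one hT hB (by omega) (by rwa [hBp, hBq])
  obtain ⟨F', rfl | rfl⟩ := exists_eq_graph_of_card_le_degree hT hB hBp hBq hp2 (by omega) hu hv
    hdegu (by omega)
  · exact .inl (F'.nonempty_iso_graph F .v)
  · exact .inr (.inl (F'.nonempty_iso_graph F .x))

lemma card_insert_zero_Ioi {p q : ℕ} (hp : 0 < p) :
    (insert ⟨0, by omega⟩ (Finset.Ioi ⟨q, by omega⟩) : Finset (Fin (p + q))).card = p := by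
  rw [Finset.card_insert_of_notMem fun h =>
    Nat.not_lt_zero q (Fin.lt_def.mp (Finset.mem_Ioi.mp h)), Fin.card_Ioi]
  simp only
  omega

namespace BTree

/-- The marked bipartition underlying `BTree p q 0 0` and `BTree p q 0 1`, in the numbering of
`BTree`. -/
def marking (p q : ℕ) (hp : 2 ≤ p) (hq : 3 ≤ q) : MarkedBipartition (Fin (p + q)) p q where
  left := insert ⟨0, by omega⟩ (Finset.Ioi ⟨q, by omega⟩)
  card_left := card_insert_zero_Ioi (by omega)
  card_right := by
    rw [Finset.card_compl, card_insert_zero_Ioi (by omega), Fintype.card_fin,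
      Nat.add_sub_cancel_left]
  u := ⟨0, by omega⟩
  w := ⟨q + 1, by omega⟩
  v := ⟨1, by omega⟩
  x := ⟨3, by omega⟩
  u_mem := by simp
  w_mem := by simp
  v_notMem := by
    simp only [Finset.mem_insert, Fin.mk.injEq, Finset.mem_Ioi, Fin.mk_lt_mk]
    omega
  x_notMem := by
    simp only [Finset.mem_insert, Fin.mk.injEq, Finset.mem_Ioi, Fin.mk_lt_mk]
    omega
  w_ne_u := by simp
  x_ne_v := by simp

variable {p q : ℕ} (hp : 2 ≤ p) (hq : 3 ≤ q)

lemma eq_graph_v : BTree p q 0 0 = (marking p q hp hq).graph .v := by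
  ext a b
  simp only [BTree, marking, MarkedBipartition.role, Role.pattern, Order.add_one_le_iff, add_zero,
    fromRel_adj, ne_eq, comap_adj, Finset.mem_insert, Finset.mem_Ioi, fromEdgeSet_adj,
    Set.mem_insert_iff, Sym2.eq, Sym2.rel_iff', Prod.mk.injEq, Prod.swap_prod_mk,
    Set.mem_singleton_iff]
  grind

lemma eq_graph_x : BTree p q 0 1 = (marking p q hp hq).graph .x := by
  ext a b
  simp only [BTree, marking, MarkedBipartition.role, Role.pattern, Order.add_one_le_iff, add_zero,
    fromRel_adj, ne_eq, comap_adj, Finset.mem_insert, Finset.mem_Ioi, fromEdgeSet_adj,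
    Set.mem_insert_iff, Sym2.eq, Sym2.rel_iff', Prod.mk.injEq, Prod.swap_prod_mk,
    Set.mem_singleton_iff]
  grind

end BTree

theorem stmt_3_general (p q : ℕ) (hp : 2 ≤ p) (hq : 3 ≤ q) (hpq : p ≤ q)
    (T : SimpleGraph (Fin (p + q))) (hT : TreeBip p q T)
    (h0 : ¬ Nonempty (T ≃g BTree p q 0 0))
    (h1 : ¬ Nonempty (T ≃g BTree p q 0 1)) :
    SLt T (BTree p q 0 1) := by
  obtain ⟨hTree, A, hAp, hA⟩ := hT
  have hAq : Aᶜ.card = q := by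
    rw [Finset.card_compl, hAp, Fintype.card_fin, Nat.add_sub_cancel_left]
  rw [BTree.eq_graph_v hp hq] at h0
  rw [BTree.eq_graph_x hp hq] at h1 ⊢
  exact (nonempty_iso_or_sLt_graph_x _ hTree (isBipartiteWith_of_forall_adj hA) hAp hAq hq hpq
    |>.resolve_left h0).resolve_left h1

/-- For `4 ≤ p ≤ q` and `n = p + q`, every tree `T ∈ 𝒯_n^{p,q}`
isomorphic to neither `B_{p,q}^{0,0}` nor `B_{p,q}^{0,1}` satisfies
`T ≺_s B_{p,q}^{0,1}`: `B_{p,q}^{0,1}` is the unique second last tree in the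
S-order among `𝒯_n^{p,q}`. -/
theorem stmt_3 (p q : ℕ) (hp : 4 ≤ p) (hpq : p ≤ q)
    (T : SimpleGraph (Fin (p + q))) (hT : TreeBip p q T)
    (h0 : ¬ Nonempty (T ≃g BTree p q 0 0))
    (h1 : ¬ Nonempty (T ≃g BTree p q 0 1)) :
    SLt T (BTree p q 0 1) :=
  stmt_3_general p q (by omega) (by omega) hpq T hT h0 h1
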